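/- Let K be a formally real field (i.e., −1 is not a sum of squares in K) and let n ≥ 1. Then there do not exist elements a₁, …, aₙ ∈ K such that each of the n elements a₁ − a₂ − 1, a₂ − a₃ − 1, …, a_{n−1} − aₙ − 1, aₙ − a₁ − 1 is a sum of four squares in K. -/

import Mathlib

/-- Section 5.3 (Dittmann): if `K` is formally real (`−1` is not a sum of squares)
and `n ≥ 1`, then there is no cyclic tuple `a₁,…,aₙ ∈ K` such that each of
`a₁ − a₂ − 1, …, a_{n−1} − aₙ − 1, aₙ − a₁ − 1` is a sum of four squares in `K`. -/
theorem stmt_11 {K : Type*} [Field K] (hreal : ¬ IsSumSq (-1 : K))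
    (n : ℕ) (hn : 1 ≤ n) :
    ¬ ∃ a : ZMod n → K, ∀ i : ZMod n,
        ∃ z₁ z₂ z₃ z₄ : K,
          a i - a (i + 1) - 1 = z₁ ^ 2 + z₂ ^ 2 + z₃ ^ 2 + z₄ ^ 2 := by
  rintro ⟨a, ha⟩
  haveI : NeZero n := ⟨by omega⟩
  have hS : IsSumSq (∑ i : ZMod n, (a i - a (i + 1) - 1)) := by
    refine IsSumSq.sum fun i _ => ?_
    obtain ⟨z₁, z₂, z₃, z₄, h⟩ := ha i
    rw [h]
    simp only [pow_two]
    exact (((IsSumSq.mul_self _).add (IsSumSq.mul_self _)).add (IsSumSq.mul_self _)).add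
      (IsSumSq.mul_self _)
  have h1 : ∑ i : ZMod n, a (i + 1) = ∑ i : ZMod n, a i :=
    Equiv.sum_comp (Equiv.addRight (1 : ZMod n)) a
  have h2 : ∑ i : ZMod n, (a i - a (i + 1) - 1) = -(n : K) := by
    rw [Finset.sum_sub_distrib, Finset.sum_sub_distrib, h1]
    simp [ZMod.card]
  rw [h2] at hS
  apply hreal
  have h3 : (-1 : K) = -(n : K) + ((n - 1 : ℕ) : K) := by
    rw [Nat.cast_sub hn]
    push_cast
    ring
  rw [h3]
  exact hS.add (IsSumSq.natCast _)
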